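/- Let V be a real vector space with a symmetric bilinear form ⟨·,·⟩, let a₂, a₃ ∈ V, write hᵢⱼ := ⟨aᵢ, aⱼ⟩, and suppose h₃₃ > 0 and h₂₂ < 0. Set q := h₃₃ • a₂ − h₂₃ • a₃. Then −⟨a₂, q⟩ / √(⟨q, q⟩·⟨a₂, a₂⟩) = √((h₂₂h₃₃ − h₂₃²)/(h₂₂h₃₃)). -/

import Mathlib

/-!
The vector `q` is orthogonal to `a₃`, so that `⟨q, q⟩ = h₃₃ ⟨q, a₂⟩`, while `⟨a₂, q⟩` is the Gram
determinant `D = h₂₂ h₃₃ - h₂₃²`. The left-hand side is therefore `-D / √(D · h₂₂ h₃₃)`. As `h₂₂`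
and `h₃₃` have opposite signs, `D` is negative, and a factor `√(-D)` cancels.
-/

section CommRing

variable {R M : Type*} [CommRing R] [AddCommGroup M] [Module R M]

/-- The Gram determinant of two vectors with respect to a symmetric bilinear form, which decides the
signature of the form on the plane they span. -/
def gramDet (B : LinearMap.BilinForm R M) (x y : M) : R :=
  B x x * B y y - B x y ^ 2

/-- The truncating vertex on the line through `x` and `y`: the point where this line meets the polar
hyperplane of `y`. It is the component of `x` orthogonal to `y`, scaled by `B y y` to avoid
division. -/
def truncatingVertex (B : LinearMap.BilinForm R M) (x y : M) : M :=
  B y y • x - B x y • y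

variable {B : LinearMap.BilinForm R M}

theorem truncatingVertex_apply_eq_zero (x y : M) : B (truncatingVertex B x y) y = 0 := by
  simp only [truncatingVertex, map_sub, map_smul, LinearMap.sub_apply, LinearMap.smul_apply,
    smul_eq_mul]
  ring

theorem apply_truncatingVertex (x y : M) : B x (truncatingVertex B x y) = gramDet B x y := by
  simp only [truncatingVertex, gramDet, map_sub, map_smul, smul_eq_mul]
  ring

theorem apply_truncatingVertex_self (hB : B.IsSymm) (x y : M) :
    B (truncatingVertex B x y) (truncatingVertex B x y) = B y y * gramDet B x y := by
  set q := truncatingVertex B x y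
  have hqy : B q y = 0 := truncatingVertex_apply_eq_zero x y
  calc B q q = B q (B y y • x - B x y • y) := rfl
    _ = B y y * B q x := by simp only [map_sub, map_smul, smul_eq_mul, hqy, mul_zero, sub_zero]
    _ = B y y * gramDet B x y := by rw [hB.eq q x, apply_truncatingVertex]

theorem gramDet_neg [LinearOrder R] [IsStrictOrderedRing R] {x y : M} (h : B x x * B y y < 0) :
    gramDet B x y < 0 :=
  sub_neg_of_lt (h.trans_le (sq_nonneg _))

end CommRing

theorem div_sqrt_mul_eq_sqrt_div {x : ℝ} (hx : 0 ≤ x) (c : ℝ) : x / √(x * c) = √(x / c) := by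
  rw [Real.sqrt_mul hx, Real.sqrt_div hx, ← div_div, Real.div_sqrt]

theorem cosh_dist_Q_A2_general {V : Type*} [AddCommGroup V] [Module ℝ V]
    {B : LinearMap.BilinForm ℝ V} (hB : B.IsSymm) {x y : V} (hxy : B x x * B y y < 0) :
    -(B x (truncatingVertex B x y)) /
        √(B (truncatingVertex B x y) (truncatingVertex B x y) * B x x) =
      √(gramDet B x y / (B x x * B y y)) := by
  have hD : 0 ≤ -gramDet B x y := (neg_pos.mpr (gramDet_neg hxy)).le
  rw [apply_truncatingVertex, apply_truncatingVertex_self hB]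
  calc -gramDet B x y / √(B y y * gramDet B x y * B x x)
      = -gramDet B x y / √(-gramDet B x y * -(B x x * B y y)) := by ring_nf
    _ = √(-gramDet B x y / -(B x x * B y y)) := div_sqrt_mul_eq_sqrt_div hD _
    _ = √(gramDet B x y / (B x x * B y y)) := by rw [neg_div_neg_eq]

theorem cosh_dist_Q_A2 (V : Type*) [AddCommGroup V] [Module ℝ V]
    (B : LinearMap.BilinForm ℝ V) (hB : ∀ x y : V, B x y = B y x)
    (a₂ a₃ : V)
    (h33 : 0 < B a₃ a₃) (h22 : B a₂ a₂ < 0)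
    (q : V) (hq : q = B a₃ a₃ • a₂ - B a₂ a₃ • a₃) :
    -(B a₂ q) / Real.sqrt (B q q * B a₂ a₂) =
      Real.sqrt ((B a₂ a₂ * B a₃ a₃ - (B a₂ a₃) ^ 2) / (B a₂ a₂ * B a₃ a₃)) := by
  subst hq
  exact cosh_dist_Q_A2_general ⟨hB⟩ (mul_neg_of_neg_of_pos h22 h33)
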